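/- There is an absolute constant C > 0 such that for every n ≥ 2, every ε ∈ (0,1], and every distribution p on {-1,1}^n with d_TV(p, U) ≥ ε, one has ε ≤ C·log n · ( E_{x∼p}[ ∑_{i=1}^n ( (p(x) − p(x^{(i)}))⁺ / p(x) )² ] )^{1/2}, where a⁺ = max(a, 0) (every x drawn from p has p(x) > 0, so the ratios are well defined on the support). -/

import Mathlib

/-!
The logarithmic factor can be absorbed entirely, since `log n ≥ log 2`. With `g = √p` and `N = 2^n`:

* By Cauchy–Schwarz applied to `|p - 1/N| = |g - 1/√N| · |g + 1/√N|`, the total variation distance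
  satisfies `d_TV(p, U)² ≤ 1 - (∑ g)² / N`, which is the variance of `√N · g` under the uniform
  distribution (`dTVU_sq_le`).
* By the Poincaré inequality on the cube, this variance is at most
  `(1/4) ∑_x ∑_i (g(x) - g(x^{(i)}))²` (`poincare`, by induction on the dimension).
* Each edge is counted from both ends, so the sum is twice the sum of the squared positive parts,
  and for `a ≥ b ≥ 0`, `a > 0` one has `(a - b)² ≤ (a² - b²)² / a²` because `a ≤ a + b`. Hence
  `d_TV(p, U)² ≤ (1/2) E_{x∼p}[∑_i ((p(x) - p(x^{(i)}))⁺ / p(x))²]`.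
-/

open scoped Classical

noncomputable section

namespace Subcube

/-- The ±1 value of a Boolean coordinate. -/
def sgn (b : Bool) : ℝ := if b then 1 else -1

/-- Flip coordinate `i` of `x`. -/
def flipAt {ι : Type*} [DecidableEq ι] (i : ι) (x : ι → Bool) : ι → Bool :=
  Function.update x i (!(x i))

/-- `p` is a probability mass function. -/
def IsDist {α : Type*} [Fintype α] (p : α → ℝ) : Prop :=
  (∀ a, 0 ≤ p a) ∧ ∑ a, p a = 1

/-- Total variation distance to the uniform distribution. -/
def dTVU {α : Type*} [Fintype α] (p : α → ℝ) : ℝ :=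
  (1/2) * ∑ a, |p a - 1 / (Fintype.card α : ℝ)|

/-- Probability mass of the event that a sample from `p` agrees with `y` outside `S`. -/
def offMass {n : ℕ} (p : (Fin n → Bool) → ℝ) (S : Finset (Fin n)) (y : Fin n → Bool) : ℝ :=
  ∑ x : Fin n → Bool, if ∀ j ∉ S, x j = y j then p x else 0

/-- Projection of `p` to the coordinates outside `S`. -/
def projDist {n : ℕ} (p : (Fin n → Bool) → ℝ) (S : Finset (Fin n)) :
    ({i : Fin n // i ∉ S} → Bool) → ℝ :=
  fun u => ∑ x : Fin n → Bool, if ∀ i : {i : Fin n // i ∉ S}, x i.1 = u i then p x else 0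

/-- Restriction of `p` with star set `S` and non-star coordinates set according to `y`. -/
def restrictDist {n : ℕ} (p : (Fin n → Bool) → ℝ) (S : Finset (Fin n)) (y : Fin n → Bool) :
    ({i : Fin n // i ∈ S} → Bool) → ℝ :=
  fun z =>
    (∑ x : Fin n → Bool,
      if (∀ i : {i : Fin n // i ∈ S}, x i.1 = z i) ∧ (∀ j ∉ S, x j = y j) then p x else 0)
      / offMass p S y

/-- Mean of coordinate `i` of `p` conditioned on agreeing with `y` outside `S`
(the coordinate `i` of the mean vector of the restriction with star set `S`, for `i ∈ S`). -/
def condMean {n : ℕ} (p : (Fin n → Bool) → ℝ) (S : Finset (Fin n)) (y : Fin n → Bool)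
    (i : Fin n) : ℝ :=
  (∑ x : Fin n → Bool, if ∀ j ∉ S, x j = y j then p x * sgn (x i) else 0) / offMass p S y

/-- Mean vector of a distribution on a Boolean cube. -/
def meanVec {ι : Type*} [Fintype ι] (p : (ι → Bool) → ℝ) : ι → ℝ :=
  fun i => ∑ x : ι → Bool, p x * sgn (x i)

/-- Squared Euclidean norm. -/
def normSq {ι : Type*} [Fintype ι] (v : ι → ℝ) : ℝ := ∑ i, v i ^ 2

/-- Euclidean norm. -/
def l2norm {ι : Type*} [Fintype ι] (v : ι → ℝ) : ℝ := Real.sqrt (normSq v)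

theorem flipAt_cons_zero {n : ℕ} (b : Bool) (y : Fin n → Bool) :
    flipAt (0 : Fin (n + 1)) (Fin.cons b y : Fin (n + 1) → Bool) = Fin.cons (!b) y := by
  unfold flipAt
  rw [Fin.update_cons_zero, Fin.cons_zero]

theorem flipAt_cons_succ {n : ℕ} (b : Bool) (y : Fin n → Bool) (i : Fin n) :
    flipAt i.succ (Fin.cons b y : Fin (n + 1) → Bool) = Fin.cons b (flipAt i y) := by
  unfold flipAt
  rw [Fin.cons_succ, ← Fin.cons_update]

theorem flipAt_flipAt {n : ℕ} (i : Fin n) (x : Fin n → Bool) : flipAt i (flipAt i x) = x := by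
  unfold flipAt
  simp

theorem sum_flipAt {n : ℕ} (i : Fin n) (F : (Fin n → Bool) → ℝ) :
    ∑ x, F (flipAt i x) = ∑ x, F x :=
  Equiv.sum_comp (Function.Involutive.toPerm (flipAt i) (flipAt_flipAt i)) F

theorem sum_cube_succ {n : ℕ} (F : (Fin (n + 1) → Bool) → ℝ) :
    ∑ x, F x = ∑ y : Fin n → Bool, F (Fin.cons true y) + ∑ y : Fin n → Bool, F (Fin.cons false y) := by
  rw [← (Fin.consEquiv fun _ : Fin (n + 1) => Bool).sum_comp, Fintype.sum_prod_type,
    Fintype.sum_bool]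
  rfl

/-- Poincaré inequality on the cube, multiplied through by `4 ^ n`; the variance splits as the
average variance over the two facets plus a quarter of the squared difference of their means. -/
theorem poincare (n : ℕ) (g : (Fin n → Bool) → ℝ) :
    2 ^ n * ∑ x, g x ^ 2 - (∑ x, g x) ^ 2
      ≤ 2 ^ n / 4 * ∑ x, ∑ i, (g x - g (flipAt i x)) ^ 2 := by
  induction n with
  | zero => simp
  | succ n ih =>
    have h1 := ih fun y => g (Fin.cons true y)
    have h0 := ih fun y => g (Fin.cons false y)
    have hcs : (∑ y : Fin n → Bool, (g (Fin.cons true y) - g (Fin.cons false y))) ^ 2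
        ≤ 2 ^ n * ∑ y : Fin n → Bool, (g (Fin.cons true y) - g (Fin.cons false y)) ^ 2 := by
      have := sq_sum_le_card_mul_sum_sq (s := (Finset.univ : Finset (Fin n → Bool)))
        (f := fun y => g (Fin.cons true y) - g (Fin.cons false y))
      simpa using this
    have hsymm : ∑ y : Fin n → Bool, (g (Fin.cons false y) - g (Fin.cons true y)) ^ 2
        = ∑ y : Fin n → Bool, (g (Fin.cons true y) - g (Fin.cons false y)) ^ 2 :=
      Finset.sum_congr rfl fun y _ => by ring
    simp only [sum_cube_succ, Fin.sum_univ_succ, flipAt_cons_zero, flipAt_cons_succ,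
      Bool.not_true, Bool.not_false, Finset.sum_add_distrib, hsymm, pow_succ (2 : ℝ) n]
    rw [Finset.sum_sub_distrib] at hcs
    nlinarith [h1, h0, hcs]

/-- The total variation distance is at most `√(1 - BC²)`, where `BC = (∑ √p) / √(2 ^ n)` is the
Bhattacharyya coefficient of `p` and the uniform distribution. -/
theorem dTVU_sq_le {n : ℕ} (p : (Fin n → Bool) → ℝ) (hp : IsDist p) :
    dTVU p ^ 2 ≤ 1 - (∑ x, √(p x)) ^ 2 / 2 ^ n := by
  obtain ⟨h0, h1⟩ := hp
  have hN : (0 : ℝ) < 2 ^ n := by positivity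
  set s : ℝ := √(1 / 2 ^ n) with hs
  have hs2 : s ^ 2 = 1 / 2 ^ n := Real.sq_sqrt (by positivity)
  have hg2 : ∑ x, √(p x) ^ 2 = 1 := by
    rw [← h1]
    exact Finset.sum_congr rfl fun x _ => Real.sq_sqrt (h0 x)
  have hc : ∑ _x : Fin n → Bool, s ^ 2 = 1 := by
    rw [hs2]
    simp
  have hT : dTVU p = 1 / 2 * ∑ x, |√(p x) - s| * |√(p x) + s| := by
    unfold dTVU
    congr 1
    refine Finset.sum_congr rfl fun x _ => ?_
    rw [← abs_mul]
    congr 1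
    have := Real.sq_sqrt (h0 x)
    have hcard : (Fintype.card (Fin n → Bool) : ℝ) = 2 ^ n := by simp
    rw [hcard, ← hs2]
    nlinarith
  have hcs := Finset.sum_mul_sq_le_sq_mul_sq Finset.univ
    (fun x => |√(p x) - s|) (fun x => |√(p x) + s|)
  have hm : ∑ x, |√(p x) - s| ^ 2 = 2 - 2 * s * ∑ x, √(p x) := by
    simp only [sq_abs, sub_sq, Finset.sum_add_distrib, Finset.sum_sub_distrib, hg2, hc,
      Finset.mul_sum]
    have : ∑ x, 2 * √(p x) * s = ∑ x, 2 * s * √(p x) :=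
      Finset.sum_congr rfl fun x _ => by ring
    rw [this]
    ring
  have hq : ∑ x, |√(p x) + s| ^ 2 = 2 + 2 * s * ∑ x, √(p x) := by
    simp only [sq_abs, add_sq, Finset.sum_add_distrib, hg2, hc, Finset.mul_sum]
    have : ∑ x, 2 * √(p x) * s = ∑ x, 2 * s * √(p x) :=
      Finset.sum_congr rfl fun x _ => by ring
    rw [this]
    ring
  rw [hm, hq] at hcs
  have hfin : (∑ x, √(p x)) ^ 2 / 2 ^ n = s ^ 2 * (∑ x, √(p x)) ^ 2 := by
    rw [hs2]
    ring
  rw [hT, hfin]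
  nlinarith

/-- Comparison of the Dirichlet form of `√p` with the form `(a - b)⁺² / a` on one edge; when
`a = 0` both sides vanish. -/
theorem edge_le {a b : ℝ} (ha : 0 ≤ a) (hb : 0 ≤ b) :
    max (√a - √b) 0 ^ 2 ≤ a * (max (a - b) 0 / a) ^ 2 := by
  rcases le_total a b with hab | hab
  · have := Real.sqrt_le_sqrt hab
    rw [max_eq_right (by linarith)]
    simp only [ne_eq, OfNat.ofNat_ne_zero, not_false_eq_true, zero_pow]
    positivity
  · have hs := Real.sqrt_le_sqrt hab
    rcases ha.eq_or_lt with rfl | hpos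
    · have hb0 : b = 0 := le_antisymm hab hb
      simp [hb0]
    · rw [max_eq_left (by linarith), max_eq_left (by linarith)]
      have e1 := Real.sq_sqrt ha
      have e2 := Real.sq_sqrt hb
      have hu := Real.sqrt_nonneg a
      have hv := Real.sqrt_nonneg b
      have e3 : a * ((a - b) / a) ^ 2 = (a - b) ^ 2 / a := by
        field_simp
      rw [e3, le_div_iff₀ hpos]
      have e4 : a - b = (√a - √b) * (√a + √b) := by nlinarith
      rw [e4, mul_pow]
      refine mul_le_mul_of_nonneg_left ?_ (sq_nonneg _)
      nlinarith [mul_nonneg hu hv]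

theorem sum_edge_le {n : ℕ} (p : (Fin n → Bool) → ℝ) (h0 : ∀ x, 0 ≤ p x) :
    ∑ x, ∑ i, (√(p x) - √(p (flipAt i x))) ^ 2
      ≤ 2 * ∑ x, p x * ∑ i, (max (p x - p (flipAt i x)) 0 / p x) ^ 2 := by
  simp only [Finset.mul_sum]
  conv_lhs => rw [Finset.sum_comm]
  conv_rhs => rw [Finset.sum_comm]
  refine Finset.sum_le_sum fun i _ => ?_
  have hsplit : ∀ u v : ℝ, (u - v) ^ 2 = max (u - v) 0 ^ 2 + max (v - u) 0 ^ 2 := by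
    intro u v
    rcases le_total u v with h | h
    · rw [max_eq_right (by linarith), max_eq_left (by linarith)]
      ring
    · rw [max_eq_left (by linarith), max_eq_right (by linarith)]
      ring
  have hswap := sum_flipAt i fun x => max (√(p x) - √(p (flipAt i x))) 0 ^ 2
  simp only [flipAt_flipAt] at hswap
  calc ∑ x, (√(p x) - √(p (flipAt i x))) ^ 2
      = 2 * ∑ x, max (√(p x) - √(p (flipAt i x))) 0 ^ 2 := by
        simp_rw [fun x => hsplit (√(p x)) (√(p (flipAt i x)))]
        rw [Finset.sum_add_distrib, hswap]
        ring
    _ ≤ ∑ x, 2 * (p x * (max (p x - p (flipAt i x)) 0 / p x) ^ 2) := by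
        rw [Finset.mul_sum]
        exact Finset.sum_le_sum fun x _ =>
          mul_le_mul_of_nonneg_left (edge_le (h0 x) (h0 _)) (by norm_num)

/-- there is an absolute `C > 0` such that for every `n ≥ 2`, `ε ∈ (0,1]`,
and every distribution `p` on `{-1,1}^n` with `d_TV(p,U) ≥ ε`,
`ε ≤ C·log n·(E_{x∼p}[∑_i ((p(x) − p(x^{(i)}))⁺/p(x))²])^{1/2}`. -/
theorem stmt4 : ∃ C > (0:ℝ), ∀ n : ℕ, 2 ≤ n → ∀ ε : ℝ, 0 < ε → ε ≤ 1 →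
    ∀ p : (Fin n → Bool) → ℝ, IsDist p → ε ≤ dTVU p →
    ε ≤ C * Real.log n *
      Real.sqrt (∑ x : Fin n → Bool,
        p x * ∑ i : Fin n, (max (p x - p (flipAt i x)) 0 / p x) ^ 2) := by
  -- `C * log n ≥ 2 * log 2 ≥ 1`, so the bound without the logarithm suffices.
  refine ⟨2, by norm_num, fun n hn ε hε _ p hp hT => ?_⟩
  set R := ∑ x : Fin n → Bool, p x * ∑ i : Fin n, (max (p x - p (flipAt i x)) 0 / p x) ^ 2 with hR
  have hN : (0 : ℝ) < 2 ^ n := by positivity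
  have hP := poincare n fun x => √(p x)
  have hE := sum_edge_le p hp.1
  rw [← hR] at hE
  have hg2 : ∑ x, √(p x) ^ 2 = 1 := by
    rw [← hp.2]
    exact Finset.sum_congr rfl fun x _ => Real.sq_sqrt (hp.1 x)
  have hvar : 1 - (∑ x, √(p x)) ^ 2 / 2 ^ n ≤ R / 2 := by
    rw [sub_le_iff_le_add, ← sub_le_iff_le_add', le_div_iff₀ hN]
    rw [hg2] at hP
    nlinarith
  have hsq : ε ^ 2 ≤ R := by
    have h1 := dTVU_sq_le p hp
    have h2 : ε ^ 2 ≤ dTVU p ^ 2 := pow_le_pow_left₀ hε.le hT 2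
    nlinarith [sq_nonneg ε]
  have hlog : 1 ≤ 2 * Real.log n := by
    have h2 : Real.log 2 ≤ Real.log n := Real.log_le_log (by norm_num) (by exact_mod_cast hn)
    have := Real.log_two_gt_d9
    linarith
  calc ε ≤ √R := Real.le_sqrt_of_sq_le hsq
    _ ≤ 2 * Real.log n * √R := le_mul_of_one_le_left (Real.sqrt_nonneg R) hlog

end Subcube
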